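/- arXiv:1807.00233 — 2 statements merged into one kernel-verified Lean document; each statement's English description precedes it below -/
import Mathlib

section
/- For every ω ∈ ℝ, every λ ∈ ℝ and every integer n ≥ 1, there exist real numbers α_0, α_2, …, α_{2n} such that P_n(λ') = ∑_{k=0}^{n} α_{2k} (λ')^{2k} for all λ' ∈ ℝ, and moreover α_4 = 4·∑_{m=1}^{⌊n/2⌋} |∑_{l=1}^{m} exp(2πi·ω·(l²−l))|² + 4·∑_{m=1}^{⌊(n−1)/2⌋} |∑_{l=1}^{m} exp(2πi·ω·(l²−l))|². -/
open MeasureTheory Real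
open scoped Matrix

/-- The skew-shift potential `v_j(x,y) = 2 cos(2π(j(j-1)/2·ω + j·y + x))`. -/
noncomputable def v (ω : ℝ) (j : ℕ) (x y : ℝ) : ℝ :=
  2 * Real.cos (2 * Real.pi * ((j : ℝ) * ((j : ℝ) - 1) / 2 * ω + (j : ℝ) * y + x))

/-- The zero-energy transfer matrix `A_j(x,y)`. -/
noncomputable def A (ω lam : ℝ) (j : ℕ) (x y : ℝ) : Matrix (Fin 2) (Fin 2) ℝ :=
  !![-(lam * v ω j x y), -1; 1, 0]

/-- The transfer matrix products `M_n(x,y) = A_n(x,y) ⋯ A_1(x,y)`. -/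
noncomputable def M (ω lam : ℝ) : ℕ → ℝ → ℝ → Matrix (Fin 2) (Fin 2) ℝ
  | 0, _, _ => 1
  | n + 1, x, y => A ω lam (n + 1) x y * M ω lam n x y

/-- `P_n(λ) = ∫₀¹∫₀¹ Tr(M_n(x,y)ᵀ M_n(x,y)) dx dy`. -/
noncomputable def P (ω : ℝ) (n : ℕ) (lam : ℝ) : ℝ :=
  ∫ x in (0:ℝ)..1, ∫ y in (0:ℝ)..1,
    Matrix.trace ((M ω lam n x y)ᵀ * M ω lam n x y)

/-!
The trace of `MₙᵀMₙ` is the sum of the squares of four continuants, which are polynomials in `λ`.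
Their coefficients are sums of products of `v`'s whose indices alternate in parity, which bounds the
degree and makes the sum of squares even.

Averaging `vᵢvⱼvₖvₗ` over the torus leaves only the ways to split the four indices into two pairs of
equal sum: indices `t, t + a, t + b, t + a + b` contribute `2 cos(2πωab)`. In the `λ⁴` coefficient
only parallelograms with one even side `a` and one odd side `b` occur. Among those with largest
vertex `2N + 2`, each is counted once by the square of the quadratic coefficient of a continuant,
and a second time either there or by the quartic coefficient, according to which side is longer;
all of them therefore get the same weight.

On the other side, `|∑_{l ≤ m} e(ω(l² - l))|²` is a sum of `cos(2πω(l - l')(l + l' - 1))`, in which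
exactly one of the two factors is even; it is the same sum over pairs `(a, b)`.
-/

section Polynomial

open Polynomial

variable {R : Type*} [CommRing R]

lemma coeff_sq_eq_zero_of_odd {p : R[X]} {a d : ℕ} (hp : ∀ e, Even (a + e) → p.coeff e = 0)
    (hd : Odd d) : (p ^ 2).coeff d = 0 := by
  rw [sq, coeff_mul]
  refine Finset.sum_eq_zero fun e he => ?_
  rw [Finset.HasAntidiagonal.mem_antidiagonal] at he
  obtain h | h : Even (a + e.1) ∨ Even (a + e.2) := by grind
  · rw [hp _ h, zero_mul]
  · rw [hp _ h, mul_zero]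

lemma coeff_sq_four (p : R[X]) : (p ^ 2).coeff 4 =
    2 * (p.coeff 0 * p.coeff 4) + 2 * (p.coeff 1 * p.coeff 3) + p.coeff 2 ^ 2 := by
  rw [sq, coeff_mul, Finset.Nat.sum_antidiagonal_eq_sum_range_succ_mk]
  simp only [Finset.sum_range_succ, Finset.sum_range_zero, Nat.reduceSub]
  ring

lemma eval_eq_sum_range_even {p : R[X]} {n : ℕ} (hodd : ∀ d, Odd d → p.coeff d = 0)
    (hdeg : p.natDegree ≤ 2 * n) (x : R) :
    p.eval x = ∑ k ∈ Finset.range (n + 1), p.coeff (2 * k) * x ^ (2 * k) := by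
  have hp : expand R 2 (contract 2 p) = p := by
    ext d
    rw [coeff_expand two_pos, coeff_contract two_ne_zero]
    split_ifs with h
    · rw [Nat.div_mul_cancel h]
    · exact (hodd d (Nat.not_even_iff_odd.1 (mt Even.two_dvd h))).symm
  have hcontract : (contract 2 p).natDegree < n + 1 := by
    have := natDegree_expand 2 (contract 2 p)
    rw [hp] at this
    lia
  calc p.eval x = (contract 2 p).eval (x ^ 2) := by rw [← expand_eval, hp]
    _ = _ := by simp only [eval_eq_sum_range' hcontract, coeff_contract two_ne_zero, ← pow_mul,
      mul_comm _ 2]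

/-- The signed continuants of the sequence `u`, as polynomials in the coupling constant:
`continuant u (n + 1)` is the determinant of the tridiagonal matrix with diagonal
`-u₁ X, …, -uₙ X` and off-diagonal entries `1`. -/
noncomputable def continuant (u : ℕ → R) : ℕ → R[X]
  | 0 => 0
  | 1 => 1
  | n + 2 => -(C (u (n + 1)) * X * continuant u (n + 1)) - continuant u n

/-- The squared Hilbert–Schmidt norm of a product of `n + 1` transfer matrices, as a polynomial in
the coupling constant; see `trace_M_succ`. -/
noncomputable def traceGram (u : ℕ → R) (n : ℕ) : R[X] :=
  continuant u (n + 2) ^ 2 + continuant u (n + 1) ^ 2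
    + continuant (fun j => u (j + 1)) (n + 1) ^ 2 + continuant (fun j => u (j + 1)) n ^ 2

/-- The sum of all products `u i₁ ⋯ u i₂ₑ` with `1 ≤ i₁ < ⋯ < i₂ₑ ≤ 2n` whose indices are
alternately odd and even, starting with an odd one. -/
def evenAltSum (u : ℕ → R) : ℕ → ℕ → R
  | 0, _ => 1
  | e + 1, n => ∑ k ∈ Finset.range n,
      u (2 * k + 2) * ∑ j ∈ Finset.range (k + 1), u (2 * j + 1) * evenAltSum u e j

/-- The analogue of `evenAltSum` for products of `2e + 1` factors, all indices being at most
`2n - 1`. -/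
def oddAltSum (u : ℕ → R) (e n : ℕ) : R :=
  ∑ k ∈ Finset.range n, u (2 * k + 1) * evenAltSum u e k

variable (u : ℕ → R)

lemma oddAltSum_succ (e n : ℕ) :
    oddAltSum u e (n + 1) = oddAltSum u e n + u (2 * n + 1) * evenAltSum u e n :=
  Finset.sum_range_succ _ _

lemma evenAltSum_succ_succ (e n : ℕ) :
    evenAltSum u (e + 1) (n + 1) =
      evenAltSum u (e + 1) n + u (2 * n + 2) * oddAltSum u e (n + 1) :=
  Finset.sum_range_succ _ _

lemma coeff_continuant_zero (n : ℕ) :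
    (continuant u (n + 2)).coeff 0 = -(continuant u n).coeff 0 := by
  simp [continuant, mul_assoc]

lemma coeff_continuant_succ (n d : ℕ) :
    (continuant u (n + 2)).coeff (d + 1) =
      -(u (n + 1) * (continuant u (n + 1)).coeff d) - (continuant u n).coeff (d + 1) := by
  simp [continuant, mul_assoc]

lemma coeff_continuant_eq_zero_of_even : ∀ n d : ℕ, Even (n + d) → (continuant u n).coeff d = 0
  | 0, _, _ => by simp [continuant]
  | 1, d, h => by
    have hd : d ≠ 0 := by rintro rfl; simp at h
    simp [continuant, coeff_one, hd]
  | n + 2, 0, h => by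
    rw [coeff_continuant_zero, coeff_continuant_eq_zero_of_even n 0 (by grind), neg_zero]
  | n + 2, d + 1, h => by
    rw [coeff_continuant_succ, coeff_continuant_eq_zero_of_even (n + 1) d (by grind),
      coeff_continuant_eq_zero_of_even n (d + 1) (by grind), mul_zero, neg_zero, sub_zero]

lemma natDegree_continuant_le : ∀ n : ℕ, (continuant u n).natDegree ≤ n - 1
  | 0 => by simp [continuant]
  | 1 => by simp [continuant]
  | n + 2 => by
    have hmul : (C (u (n + 1)) * X * continuant u (n + 1)).natDegree ≤ n + 1 :=
      natDegree_mul_le.trans <|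
        (add_le_add (natDegree_C_mul_le _ X) (natDegree_continuant_le (n + 1))).trans <| by
          have := natDegree_X_le (R := R)
          lia
    have hsub : (continuant u n).natDegree ≤ n + 1 := (natDegree_continuant_le n).trans (by lia)
    rw [continuant]
    exact natDegree_sub_le_of_le (natDegree_neg_le_of_le hmul) hsub |>.trans (by simp)

lemma map_continuant {S : Type*} [CommRing S] (f : R →+* S) :
    ∀ n : ℕ, (continuant u n).map f = continuant (fun j => f (u j)) n
  | 0 => by simp [continuant]
  | 1 => by simp [continuant]
  | n + 2 => by
    simp [continuant, map_continuant f n, map_continuant f (n + 1)]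

lemma coeff_continuant (N : ℕ) : ∀ e : ℕ,
    (continuant u (2 * N)).coeff (2 * e + 1) = (-1) ^ (N + e) * oddAltSum u e N ∧
    (continuant u (2 * N + 1)).coeff (2 * e) = (-1) ^ (N + e) * evenAltSum u e N := by
  induction N with
  | zero =>
    rintro (_ | e)
    · simp [continuant, oddAltSum, evenAltSum]
    · simp [continuant, oddAltSum, evenAltSum, coeff_one]
  | succ N ih =>
    have hodd (e : ℕ) : (continuant u (2 * (N + 1))).coeff (2 * e + 1) =
        (-1) ^ (N + 1 + e) * oddAltSum u e (N + 1) := by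
      rw [mul_add_one, coeff_continuant_succ, (ih e).1, (ih e).2, oddAltSum_succ]
      ring
    refine fun e => ⟨hodd e, ?_⟩
    rw [show 2 * (N + 1) + 1 = 2 * N + 1 + 2 by ring]
    rcases e with _ | e
    · have hzero : (continuant u (2 * N + 1)).coeff 0 = (-1) ^ N := by
        simpa [evenAltSum] using (ih 0).2
      simp [coeff_continuant_zero, hzero, evenAltSum, pow_succ]
    · have hsucc : (continuant u (2 * N + 1)).coeff (2 * e + 1 + 1) = _ := (ih (e + 1)).2
      rw [mul_add_one, coeff_continuant_succ, show 2 * N + 1 + 1 = 2 * (N + 1) by ring, hodd,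
        hsucc, evenAltSum_succ_succ, mul_add_one 2 N]
      ring

lemma coeff_four_continuant_even_sq (N : ℕ) :
    (continuant u (2 * N) ^ 2).coeff 4 = -(2 * (oddAltSum u 0 N * oddAltSum u 1 N)) := by
  have hsign : ((-1 : R) ^ N) * (-1) ^ N = 1 := by rw [← mul_pow]; simp
  rw [coeff_sq_four, (coeff_continuant u N 0).1, (coeff_continuant u N 1).1,
    coeff_continuant_eq_zero_of_even u (2 * N) 0 (by simp),
    coeff_continuant_eq_zero_of_even u (2 * N) 2 (by grind), add_zero, pow_succ]
  linear_combination (-2 * (oddAltSum u 0 N * oddAltSum u 1 N)) * hsign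

lemma coeff_four_continuant_odd_sq (N : ℕ) :
    (continuant u (2 * N + 1) ^ 2).coeff 4 = evenAltSum u 1 N ^ 2 + 2 * evenAltSum u 2 N := by
  have hsign : ((-1 : R) ^ N) * (-1) ^ N = 1 := by rw [← mul_pow]; simp
  rw [coeff_sq_four, (coeff_continuant u N 0).2, (coeff_continuant u N 1).2,
    (coeff_continuant u N 2).2, coeff_continuant_eq_zero_of_even u (2 * N + 1) 1 (by grind),
    evenAltSum]
  linear_combination (evenAltSum u 1 N ^ 2 + 2 * evenAltSum u 2 N) * hsign

lemma coeff_traceGram_eq_zero_of_odd (n : ℕ) {d : ℕ} (hd : Odd d) :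
    (traceGram u n).coeff d = 0 := by
  simp only [traceGram, coeff_add,
    coeff_sq_eq_zero_of_odd (coeff_continuant_eq_zero_of_even _ _) hd, add_zero]

lemma natDegree_traceGram_le (n : ℕ) : (traceGram u n).natDegree ≤ 2 * (n + 1) := by
  have hsq (u : ℕ → R) {m : ℕ} (hm : m ≤ n + 2) :
      (continuant u m ^ 2).natDegree ≤ 2 * (n + 1) :=
    natDegree_pow_le_of_le 2 ((natDegree_continuant_le u m).trans (by lia))
  exact natDegree_add_le_of_degree_le (natDegree_add_le_of_degree_le
    (natDegree_add_le_of_degree_le (hsq _ (by lia)) (hsq _ (by lia))) (hsq _ (by lia)))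
    (hsq _ (by lia))

lemma map_traceGram {S : Type*} [CommRing S] (f : R →+* S) (n : ℕ) :
    (traceGram u n).map f = traceGram (fun j => f (u j)) n := by
  simp [traceGram, map_continuant]

end Polynomial

section ParallelogramMoments

variable {S : Type*} [CommRing S]

/-- The fourth moment of four indices: each of the three ways to split them into two pairs of equal
sum, i.e. to make them the vertices of a degenerate parallelogram with those pairs as diagonals,
contributes the value of `c` at the product of the two sides at `i`. -/
def parallelogramMoment (c : ℤ → S) (i j k l : ℤ) : S :=
  (if i + j = k + l then c ((i - k) * (i - l)) else 0)
    + (if i + k = j + l then c ((i - j) * (i - l)) else 0)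
    + (if i + l = j + k then c ((i - j) * (i - k)) else 0)

/-- The sum of `c (a * b)` over all even `a > 0` and odd `b > 0` with `a + b ≤ 2N + 1`, arranged by
the value `2s + 3` of `a + b`. -/
def parallelogramSum (c : ℤ → S) (N : ℕ) : S :=
  ∑ s ∈ Finset.range N, ∑ i ∈ Finset.range (s + 1), c (2 * (i + 1) * (2 * (s - i) + 1))

lemma parallelogramSum_eq_sum_corners (c : ℤ → S) (N : ℕ) :
    parallelogramSum c N =
      ∑ k ∈ Finset.range N, ∑ j ∈ Finset.range (k + 1), c (2 * (N - k) * (2 * (k - j) + 1)) := by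
  have hdiag : parallelogramSum c N = ∑ s ∈ Finset.range N, ∑ i ∈ Finset.range (s + 1),
      c (2 * ((i : ℕ) + 1) * (2 * (s - i : ℕ) + 1)) := by
    refine Finset.sum_congr rfl fun s _ => Finset.sum_congr rfl fun i hi => ?_
    rw [Nat.cast_sub (Finset.mem_range_succ_iff.1 hi)]
  rw [hdiag, Finset.sum_range_diag_flip N fun i r => c (2 * ((i : ℕ) + 1) * (2 * (r : ℕ) + 1)),
    ← Finset.sum_range_reflect]
  refine Finset.sum_congr rfl fun k hk => ?_
  rw [Finset.mem_range] at hk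
  rw [← Finset.sum_range_reflect, show N - (N - 1 - k) = k + 1 by lia]
  refine Finset.sum_congr rfl fun j hj => ?_
  rw [Finset.mem_range] at hj
  congr 3 <;> lia

lemma ite_corner_eq (c : ℤ → S) (N k j j' : ℕ) :
    (if ((2 * N + 2 : ℕ) : ℤ) + (2 * j + 1 : ℕ) = (2 * k + 2 : ℕ) + (2 * j' + 1 : ℕ) then
      c (((2 * N + 2 : ℕ) - (2 * k + 2 : ℕ)) * ((2 * N + 2 : ℕ) - (2 * j' + 1 : ℕ))) else 0) =
    if N + j = k + j' then c (2 * (N - k) * (2 * (k - j) + 1)) else 0 := by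
  refine ite_congr (propext (by lia)) (fun hvertex => ?_) fun _ => rfl
  congr 1
  zify at hvertex
  push_cast
  linear_combination 4 * (N - k : ℤ) * hvertex

/-- The contribution to `parallelogramSum c N` of the parallelograms with largest vertex `2N + 2`,
remaining even vertex `2k + 2`, smallest vertex `2j + 1` and remaining odd vertex `2j' + 1` with
`j' ∈ s k`. -/
def cornerSum (c : ℤ → S) (N : ℕ) (s : ℕ → Finset ℕ) : S :=
  ∑ k ∈ Finset.range N, ∑ j ∈ Finset.range (k + 1), ∑ j' ∈ s k,
    if N + j = k + j' then c (2 * (N - k) * (2 * (k - j) + 1)) else 0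

lemma cornerSum_range (c : ℤ → S) (N : ℕ) :
    cornerSum c N (fun _ => Finset.range (N + 1)) = parallelogramSum c N := by
  rw [parallelogramSum_eq_sum_corners]
  refine Finset.sum_congr rfl fun k hk => Finset.sum_congr rfl fun j hj => ?_
  rw [Finset.mem_range] at hk hj
  have hvertex (j' : ℕ) : N + j = k + j' ↔ j' = N + j - k := by lia
  simp only [hvertex, Finset.sum_ite_eq', Finset.mem_range, show N + j - k < N + 1 by lia, if_true]

lemma cornerSum_range_add_cornerSum_Ico (c : ℤ → S) (N : ℕ) :
    cornerSum c N (fun k => Finset.range (k + 1))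
      + cornerSum c N (fun k => Finset.Ico (k + 1) (N + 1)) = parallelogramSum c N := by
  rw [← cornerSum_range]
  simp only [cornerSum, ← Finset.sum_add_distrib]
  refine Finset.sum_congr rfl fun k hk => Finset.sum_congr rfl fun j _ => ?_
  exact Finset.sum_range_add_sum_Ico _ (by rw [Finset.mem_range] at hk; lia)

lemma cornerSum_range_succ_eq_sum_swap (c : ℤ → S) (N : ℕ) :
    cornerSum c N (fun k => Finset.range (k + 1)) =
      ∑ k ∈ Finset.range N, ∑ j ∈ Finset.range (k + 1), ∑ j' ∈ Finset.range (N + 1),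
        if N + j' = k + j then c (2 * (N - k) * (2 * (k - j') + 1)) else 0 := by
  refine Finset.sum_congr rfl fun k hk => ?_
  rw [Finset.mem_range] at hk
  rw [Finset.sum_comm (s := Finset.range (k + 1)) (t := Finset.range (N + 1))]
  refine Finset.sum_subset (Finset.range_subset_range.2 (by lia)) fun j' _ hj' => ?_
  refine Finset.sum_eq_zero fun j hj => if_neg ?_
  rw [Finset.mem_range] at hj hj'
  lia

variable {R F : Type*} [CommRing R] [FunLike F R S]

/-- The functional `E` assigns to products of four terms of `u` the moments
`parallelogramMoment c`. -/
def HasParallelogramMoments (E : F) (u : ℕ → R) (c : ℤ → S) : Prop :=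
  ∀ i j k l : ℕ, E (u i * u j * u k * u l) = parallelogramMoment c i j k l

namespace HasParallelogramMoments

variable {E : F} {u : ℕ → R} {c : ℤ → S}

lemma shift (h : HasParallelogramMoments E u c) :
    HasParallelogramMoments E (fun j => u (j + 1)) c := by
  intro i j k l
  have hcancel (a b c d : ℤ) : a + 1 + (b + 1) = c + 1 + (d + 1) ↔ a + b = c + d := by lia
  simp only [h _ _ _ _, parallelogramMoment, Nat.cast_add, Nat.cast_one, hcancel,
    add_sub_add_right_eq_sub]

variable [AddMonoidHomClass F R S]

lemma map_oddAltSum_zero_mul_oddAltSum_one (h : HasParallelogramMoments E u c) (N : ℕ) :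
    E (oddAltSum u 0 N * oddAltSum u 1 N) = 0 := by
  simp only [oddAltSum, evenAltSum, mul_one, Finset.mul_sum, Finset.sum_mul, map_sum, ← mul_assoc]
  refine Finset.sum_eq_zero fun i _ => Finset.sum_eq_zero fun k _ => Finset.sum_eq_zero fun k' _ =>
    Finset.sum_eq_zero fun i' _ => ?_
  -- Three indices are odd and one is even, so no two pairs of them have the same sum.
  rw [h, parallelogramMoment, if_neg (by lia), if_neg (by lia), if_neg (by lia)]
  simp

lemma map_sq_mul_oddAltSum_zero_sq (h : HasParallelogramMoments E u c) (N : ℕ) :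
    E (u (2 * N + 2) * u (2 * N + 2) * oddAltSum u 0 (N + 1) * oddAltSum u 0 (N + 1)) =
      2 * (N + 1) * c 0 := by
  have hterm : ∀ i ∈ Finset.range (N + 1), ∀ j ∈ Finset.range (N + 1),
      E (u (2 * N + 2) * u (2 * N + 2) * u (2 * j + 1) * u (2 * i + 1)) =
        if i = j then 2 * c 0 else 0 := by
    intro i hi j hj
    rw [Finset.mem_range] at hi hj
    rw [h, parallelogramMoment, if_neg (by lia), zero_add]
    by_cases hij : i = j
    · simp only [hij, if_true, sub_self, zero_mul, two_mul]
    · rw [if_neg (by lia), if_neg (by lia), if_neg hij, add_zero]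
  simp only [oddAltSum, evenAltSum, mul_one, Finset.mul_sum, Finset.sum_mul, map_sum]
  calc _ = ∑ i ∈ Finset.range (N + 1), ∑ j ∈ Finset.range (N + 1), if i = j then 2 * c 0 else 0 :=
        Finset.sum_congr rfl fun i hi => Finset.sum_congr rfl fun j hj => hterm i hi j hj
    _ = ∑ i ∈ Finset.range (N + 1), 2 * c 0 :=
        Finset.sum_congr rfl fun i hi => by rw [Finset.sum_ite_eq, if_pos hi]
    _ = 2 * (N + 1) * c 0 := by simp; ring

lemma map_mul_evenAltSum_one_mul_oddAltSum_zero (h : HasParallelogramMoments E u c) (N : ℕ) :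
    E (u (2 * N + 2) * evenAltSum u 1 N * oddAltSum u 0 (N + 1)) =
      parallelogramSum c N + cornerSum c N (fun k => Finset.range (k + 1)) := by
  have hexpand : u (2 * N + 2) * evenAltSum u 1 N * oddAltSum u 0 (N + 1) =
      ∑ k ∈ Finset.range N, ∑ j ∈ Finset.range (k + 1), ∑ j' ∈ Finset.range (N + 1),
        u (2 * N + 2) * u (2 * k + 2) * u (2 * j + 1) * u (2 * j' + 1) := by
    simp only [oddAltSum, evenAltSum, mul_one, Finset.mul_sum, Finset.sum_mul, ← mul_assoc]
    rw [Finset.sum_comm]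
    exact Finset.sum_congr rfl fun k _ => Finset.sum_comm
  rw [hexpand, ← cornerSum_range, cornerSum_range_succ_eq_sum_swap, cornerSum]
  simp only [map_sum, ← Finset.sum_add_distrib]
  refine Finset.sum_congr rfl fun k hk => Finset.sum_congr rfl fun j hj =>
    Finset.sum_congr rfl fun j' hj' => ?_
  rw [Finset.mem_range] at hk hj hj'
  rw [h, parallelogramMoment, if_neg (by lia), zero_add]
  exact congrArg₂ (· + ·) (ite_corner_eq c N k j j') (ite_corner_eq c N k j' j)

lemma map_mul_oddAltSum_one (h : HasParallelogramMoments E u c) (N : ℕ) :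
    E (u (2 * N + 2) * oddAltSum u 1 (N + 1)) =
      cornerSum c N (fun k => Finset.Ico (k + 1) (N + 1)) := by
  simp only [oddAltSum, evenAltSum, mul_one, Finset.mul_sum, map_sum, ← mul_assoc, cornerSum]
  rw [Finset.sum_comm' (s' := fun k => Finset.Ico (k + 1) (N + 1)) (t' := Finset.range N)
    (by intro x y; simp only [Finset.mem_range, Finset.mem_Ico]; lia)]
  refine Finset.sum_congr rfl fun k hk => ?_
  rw [Finset.sum_comm]
  refine Finset.sum_congr rfl fun j hj => Finset.sum_congr rfl fun j' hj' => ?_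
  rw [Finset.mem_range] at hk hj
  rw [Finset.mem_Ico] at hj'
  rw [h, parallelogramMoment, if_neg (by lia), if_neg (by lia), zero_add, zero_add,
    add_comm ((2 * j' + 1 : ℕ) : ℤ), mul_comm (_ - ((2 * j' + 1 : ℕ) : ℤ))]
  exact ite_corner_eq c N k j j'

lemma map_evenAltSum_succ (h : HasParallelogramMoments E u c) (N : ℕ) :
    E (evenAltSum u 1 (N + 1) ^ 2 + 2 * evenAltSum u 2 (N + 1)) =
      E (evenAltSum u 1 N ^ 2 + 2 * evenAltSum u 2 N)
        + (2 * (N + 1) * c 0 + 4 * parallelogramSum c N) := by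
  have hexpand : evenAltSum u 1 (N + 1) ^ 2 + 2 * evenAltSum u 2 (N + 1) =
      evenAltSum u 1 N ^ 2 + 2 * evenAltSum u 2 N
        + 2 • (u (2 * N + 2) * evenAltSum u 1 N * oddAltSum u 0 (N + 1))
        + 2 • (u (2 * N + 2) * oddAltSum u 1 (N + 1))
        + u (2 * N + 2) * u (2 * N + 2) * oddAltSum u 0 (N + 1) * oddAltSum u 0 (N + 1) := by
    rw [evenAltSum_succ_succ u 0, evenAltSum_succ_succ u 1, two_nsmul, two_nsmul]
    ring
  rw [hexpand, map_add, map_add, map_add, map_nsmul, map_nsmul, h.map_sq_mul_oddAltSum_zero_sq,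
    h.map_mul_evenAltSum_one_mul_oddAltSum_zero, h.map_mul_oddAltSum_one,
    ← cornerSum_range_add_cornerSum_Ico]
  simp only [nsmul_eq_mul]
  push_cast
  ring

lemma map_coeff_four_continuant_even_sq (h : HasParallelogramMoments E u c) (N : ℕ) :
    E ((continuant u (2 * N) ^ 2).coeff 4) = 0 := by
  rw [coeff_four_continuant_even_sq, two_mul, map_neg, map_add,
    h.map_oddAltSum_zero_mul_oddAltSum_one, add_zero, neg_zero]

lemma map_coeff_four_continuant_odd_sq (h : HasParallelogramMoments E u c) (N : ℕ) :
    E ((continuant u (2 * N + 1) ^ 2).coeff 4) =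
      ∑ m ∈ Finset.range N, (2 * (m + 1) * c 0 + 4 * parallelogramSum c m) := by
  rw [coeff_four_continuant_odd_sq]
  induction N with
  | zero => simp [evenAltSum]
  | succ N ih => rw [h.map_evenAltSum_succ, ih, Finset.sum_range_succ]

lemma map_coeff_four_traceGram (h : HasParallelogramMoments E u c) (n : ℕ) :
    E ((traceGram u n).coeff 4) =
      ∑ m ∈ Finset.range ((n + 1) / 2), (2 * (m + 1) * c 0 + 4 * parallelogramSum c m)
        + ∑ m ∈ Finset.range (n / 2), (2 * (m + 1) * c 0 + 4 * parallelogramSum c m) := by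
  simp only [traceGram, Polynomial.coeff_add, map_add]
  obtain ⟨N, rfl | rfl⟩ := n.even_or_odd'
  · rw [show 2 * N + 2 = 2 * (N + 1) by ring, h.map_coeff_four_continuant_even_sq,
      h.shift.map_coeff_four_continuant_even_sq, h.map_coeff_four_continuant_odd_sq,
      h.shift.map_coeff_four_continuant_odd_sq, show (2 * N + 1) / 2 = N by lia,
      show 2 * N / 2 = N by lia]
    ring
  · rw [show 2 * N + 1 + 2 = 2 * (N + 1) + 1 by ring, show 2 * N + 1 + 1 = 2 * (N + 1) by ring,
      h.map_coeff_four_continuant_even_sq, h.shift.map_coeff_four_continuant_even_sq,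
      h.map_coeff_four_continuant_odd_sq, h.shift.map_coeff_four_continuant_odd_sq,
      show 2 * (N + 1) / 2 = N + 1 by lia, show (2 * N + 1) / 2 = N by lia]
    ring

end HasParallelogramMoments

end ParallelogramMoments

section WeylSum

lemma norm_sq_sum_exp_range_succ (θ : ℕ → ℝ) (m : ℕ) :
    ‖∑ l ∈ Finset.range (m + 1), Complex.exp (θ l * Complex.I)‖ ^ 2 =
      ‖∑ l ∈ Finset.range m, Complex.exp (θ l * Complex.I)‖ ^ 2 + 1
        + ∑ l ∈ Finset.range m, 2 * Real.cos (θ m - θ l) := by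
  have hcross (a b : ℝ) : (Complex.exp (a * Complex.I) *
      (starRingEnd ℂ) (Complex.exp (b * Complex.I))).re = Real.cos (b - a) := by
    rw [← Complex.exp_conj, ← Complex.exp_add, ← Real.cos_neg, neg_sub,
      ← Complex.exp_ofReal_mul_I_re]
    simp [add_mul, sub_eq_add_neg]
  rw [Finset.sum_range_succ, ← Complex.normSq_eq_norm_sq, Complex.normSq_add,
    Complex.normSq_eq_norm_sq, Complex.normSq_eq_norm_sq, Complex.norm_exp_ofReal_mul_I, one_pow,
    Finset.sum_mul, Complex.re_sum, Finset.mul_sum]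
  simp only [hcross]

lemma sum_range_two_mul {G : Type*} [AddCommMonoid G] (f : ℕ → G) (n : ℕ) :
    ∑ i ∈ Finset.range (2 * n), f i =
      ∑ i ∈ Finset.range n, f (2 * i) + ∑ i ∈ Finset.range n, f (2 * i + 1) := by
  induction n with
  | zero => simp
  | succ n ih =>
    rw [mul_add_one, Finset.sum_range_succ, Finset.sum_range_succ, ih, Finset.sum_range_succ,
      Finset.sum_range_succ]
    abel

-- Both sides are half of the sum over `range (2 * m)`.
lemma sum_odd_eq_sum_upper_half_of_symm {m : ℕ} {f : ℕ → ℝ}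
    (hf : ∀ i < 2 * m, f (2 * m - 1 - i) = f i) :
    ∑ i ∈ Finset.range m, f (2 * i + 1) = ∑ i ∈ Finset.range m, f (m + i) := by
  have heven : ∑ i ∈ Finset.range m, f (2 * i) = ∑ i ∈ Finset.range m, f (2 * i + 1) := by
    rw [← Finset.sum_range_reflect]
    refine Finset.sum_congr rfl fun i hi => ?_
    rw [Finset.mem_range] at hi
    rw [← hf _ (by lia)]
    congr 1
    lia
  have hlower : ∑ i ∈ Finset.range m, f i = ∑ i ∈ Finset.range m, f (m + i) := by
    rw [← Finset.sum_range_reflect]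
    refine Finset.sum_congr rfl fun i hi => ?_
    rw [Finset.mem_range] at hi
    rw [← hf _ (by lia)]
    congr 1
    lia
  have hsplit := sum_range_two_mul f m
  rw [two_mul, Finset.sum_range_add, hlower, heven] at hsplit
  linarith

/-- The quadratic Weyl sum `∑_{l=1}^m e(ω (l² - l))`. -/
noncomputable def weylSum (ω : ℝ) (m : ℕ) : ℂ :=
  ∑ l ∈ Finset.Icc 1 m,
    Complex.exp (2 * (Real.pi : ℂ) * Complex.I * (ω : ℂ) * ((l : ℂ) ^ 2 - (l : ℂ)))

/-- The correlation `2 cos(2πωk)` of two phases that differ by `k` multiples of `ω`. -/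
noncomputable def phaseCos (ω : ℝ) (k : ℤ) : ℝ := 2 * Real.cos (2 * Real.pi * (k * ω))

lemma norm_weylSum_succ_sq (ω : ℝ) (m : ℕ) :
    ‖weylSum ω (m + 1)‖ ^ 2 = ‖weylSum ω m‖ ^ 2 + 1
      + ∑ l ∈ Finset.range m, phaseCos ω ((m - l) * (m + l + 1)) := by
  have hrange (n : ℕ) : weylSum ω n = ∑ l ∈ Finset.range n,
      Complex.exp ((2 * Real.pi * ω * ((l + 1) * l) : ℝ) * Complex.I) := by
    rw [weylSum, ← Finset.Ico_add_one_right_eq_Icc, Finset.sum_Ico_eq_sum_range]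
    refine Finset.sum_congr (by simp) fun l _ => ?_
    push_cast
    ring_nf
  simp only [hrange, norm_sq_sum_exp_range_succ]
  congr 1
  refine Finset.sum_congr rfl fun l _ => ?_
  rw [phaseCos]
  push_cast
  ring_nf

lemma parallelogramSum_phaseCos_succ (ω : ℝ) (N : ℕ) :
    parallelogramSum (phaseCos ω) (N + 1) = parallelogramSum (phaseCos ω) N
      + ∑ l ∈ Finset.range (N + 1), phaseCos ω ((N + 1 - l) * (N + 1 + l + 1)) := by
  have hsymm := sum_odd_eq_sum_upper_half_of_symm (m := N + 1)
    (f := fun i => phaseCos ω ((i + 1) * (2 * (N + 1) - i))) fun i hi => by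
      rw [Nat.sub_sub, Nat.cast_sub (by lia)]
      push_cast
      ring_nf
  rw [parallelogramSum, Finset.sum_range_succ]
  congr 1
  refine Eq.trans (Finset.sum_congr rfl fun i _ => ?_)
    (hsymm.trans (Finset.sum_congr rfl fun i _ => ?_))
  · push_cast
    ring_nf
  · push_cast
    ring_nf

lemma norm_weylSum_succ_sq_eq_parallelogramSum (ω : ℝ) (N : ℕ) :
    ‖weylSum ω (N + 1)‖ ^ 2 = N + 1 + parallelogramSum (phaseCos ω) N := by
  induction N with
  | zero => simp [weylSum, parallelogramSum]
  | succ N ih =>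
    rw [norm_weylSum_succ_sq, ih, parallelogramSum_phaseCos_succ]
    push_cast
    ring

lemma four_mul_sum_norm_weylSum_sq (ω : ℝ) (N : ℕ) :
    4 * ∑ m ∈ Finset.Icc 1 N, ‖weylSum ω m‖ ^ 2 = ∑ m ∈ Finset.range N,
      (2 * (m + 1) * phaseCos ω 0 + 4 * parallelogramSum (phaseCos ω) m) := by
  have hzero : phaseCos ω 0 = 2 := by simp [phaseCos]
  rw [← Finset.Ico_add_one_right_eq_Icc, Finset.sum_Ico_eq_sum_range, Finset.mul_sum]
  refine Finset.sum_congr (by simp) fun m _ => ?_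
  rw [add_comm 1 m, norm_weylSum_succ_sq_eq_parallelogramSum, hzero]
  ring

end WeylSum

section TorusMean

lemma integral_two_mul_cos (a : ℤ) (t : ℝ) :
    ∫ y in (0 : ℝ)..1, 2 * Real.cos (2 * Real.pi * (a * y + t)) =
      if a = 0 then 2 * Real.cos (2 * Real.pi * t) else 0 := by
  split_ifs with ha
  · simp [ha]
  · have hscale : (2 * Real.pi * a : ℝ) ≠ 0 :=
      mul_ne_zero Real.two_pi_pos.ne' (Int.cast_ne_zero.2 ha)
    simp only [mul_add, ← mul_assoc _ (a : ℝ)]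
    rw [intervalIntegral.integral_const_mul,
      intervalIntegral.integral_comp_mul_add Real.cos hscale, integral_cos,
      show 2 * Real.pi * a * 1 + 2 * Real.pi * t = 2 * Real.pi * t + a * (2 * Real.pi) by ring,
      Real.sin_add_int_mul_two_pi]
    simp

/-- The average over the unit square, as a linear functional on continuous functions. -/
noncomputable def torusMean : C(ℝ × ℝ, ℝ) →ₗ[ℝ] ℝ where
  toFun f := ∫ x in (0 : ℝ)..1, ∫ y in (0 : ℝ)..1, f (x, y)
  map_add' f g := by
    have hinner (f : C(ℝ × ℝ, ℝ)) (x : ℝ) : IntervalIntegrable (fun y => f (x, y)) volume 0 1 :=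
      Continuous.intervalIntegrable (by fun_prop) _ _
    have houter (f : C(ℝ × ℝ, ℝ)) :
        IntervalIntegrable (fun x => ∫ y in (0 : ℝ)..1, f (x, y)) volume 0 1 :=
      (intervalIntegral.continuous_parametric_intervalIntegral_of_continuous'
        (f := fun x y => f (x, y)) f.continuous 0 1).intervalIntegrable _ _
    simp only [ContinuousMap.add_apply, intervalIntegral.integral_add (hinner f _) (hinner g _),
      intervalIntegral.integral_add (houter f) (houter g)]
  map_smul' c f := by simp [intervalIntegral.integral_const_mul]

lemma torusMean_apply (f : C(ℝ × ℝ, ℝ)) :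
    torusMean f = ∫ x in (0 : ℝ)..1, ∫ y in (0 : ℝ)..1, f (x, y) := rfl

/-- The function `(x, y) ↦ 2 cos(2π(θ + a y + b x))` on the torus. -/
noncomputable def cosMode (θ : ℝ) (a b : ℤ) : C(ℝ × ℝ, ℝ) :=
  ⟨fun p => 2 * Real.cos (2 * Real.pi * (θ + a * p.2 + b * p.1)), by fun_prop⟩

lemma cosMode_mul (θ θ' : ℝ) (a a' b b' : ℤ) :
    cosMode θ a b * cosMode θ' a' b' =
      cosMode (θ + θ') (a + a') (b + b') + cosMode (θ - θ') (a - a') (b - b') := by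
  ext p
  have hprod (s t : ℝ) : 2 * Real.cos s * (2 * Real.cos t) =
      2 * Real.cos (s + t) + 2 * Real.cos (s - t) := by
    rw [Real.cos_add, Real.cos_sub]
    ring
  simp only [cosMode, ContinuousMap.mul_apply, ContinuousMap.add_apply, ContinuousMap.coe_mk, hprod]
  push_cast
  ring_nf

lemma torusMean_cosMode (θ : ℝ) (a b : ℤ) :
    torusMean (cosMode θ a b) =
      if a = 0 ∧ b = 0 then 2 * Real.cos (2 * Real.pi * θ) else 0 := by
  have hinner (x : ℝ) : ∫ y in (0 : ℝ)..1, cosMode θ a b (x, y) =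
      if a = 0 then 2 * Real.cos (2 * Real.pi * (b * x + θ)) else 0 := by
    rw [← integral_two_mul_cos]
    congr! 4 with y
    simp only [cosMode, ContinuousMap.coe_mk]
    ring_nf
  simp only [torusMean_apply, hinner]
  by_cases ha : a = 0
  · simp only [ha, if_true, true_and, integral_two_mul_cos]
  · simp [ha]

/-- The skew-shift potential `v ω j` as a continuous function on the torus. -/
noncomputable def potential (ω : ℝ) (j : ℕ) : C(ℝ × ℝ, ℝ) := cosMode (j * (j - 1) / 2 * ω) j 1

lemma potential_apply (ω : ℝ) (j : ℕ) (x y : ℝ) : potential ω j (x, y) = v ω j x y := by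
  simp [potential, cosMode, v]

lemma torusMean_cosMode_of_ne_zero (θ : ℝ) (a : ℤ) {b : ℤ} (hb : b ≠ 0) :
    torusMean (cosMode θ a b) = 0 := by
  rw [torusMean_cosMode, if_neg fun h => hb h.2]

lemma torusMean_cosMode_pair (ω : ℝ) {i j k l a : ℤ} {θ : ℝ} (ha : a = i + j - (k + l))
    (hθ : θ = i * (i - 1) / 2 * ω + j * (j - 1) / 2 * ω
      - (k * (k - 1) / 2 * ω + l * (l - 1) / 2 * ω)) :
    torusMean (cosMode θ a 0) =
      if i + j = k + l then phaseCos ω ((i - k) * (i - l)) else 0 := by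
  rw [torusMean_cosMode]
  refine ite_congr (by simp [ha, sub_eq_zero]) (fun hsum => ?_) fun _ => rfl
  have hphase : θ = ((i - k) * (i - l) : ℤ) * ω := by
    obtain rfl := eq_sub_of_add_eq' hsum
    rw [hθ]
    push_cast
    ring
  rw [phaseCos, hphase]

lemma hasParallelogramMoments_potential (ω : ℝ) :
    HasParallelogramMoments torusMean (potential ω) (phaseCos ω) := by
  intro i j k l
  rw [mul_assoc _ (potential ω k)]
  simp only [potential, cosMode_mul, add_mul, mul_add, map_add, Int.reduceAdd, Int.reduceSub,
    torusMean_cosMode_of_ne_zero, ne_eq, Int.reduceEq, not_false_eq_true, add_zero, zero_add]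
  rw [parallelogramMoment, add_assoc]
  congr 1
  · exact torusMean_cosMode_pair ω (by ring) (by push_cast; ring)
  congr 1
  · exact torusMean_cosMode_pair ω (by ring) (by push_cast; ring)
  · exact torusMean_cosMode_pair ω (by ring) (by push_cast; ring)

end TorusMean

section TransferMatrices

lemma M_succ_eq (ω lam x y : ℝ) (n : ℕ) :
    M ω lam (n + 1) x y =
      !![(continuant (fun j => v ω j x y) (n + 2)).eval lam,
          -(continuant (fun j => v ω (j + 1) x y) (n + 1)).eval lam;
        (continuant (fun j => v ω j x y) (n + 1)).eval lam,
          -(continuant (fun j => v ω (j + 1) x y) n).eval lam] := by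
  have hrec (u : ℕ → ℝ) (n : ℕ) : (continuant u (n + 2)).eval lam =
      -(lam * u (n + 1)) * (continuant u (n + 1)).eval lam - (continuant u n).eval lam := by
    simp [continuant, mul_comm lam]
  induction n with
  | zero => simp [M, A, continuant, mul_comm lam]
  | succ n ih =>
    rw [M, ih, A, Matrix.mul_fin_two, hrec _ (n + 1), hrec (fun j => v ω (j + 1) x y) n]
    simp [sub_eq_add_neg, neg_add, -neg_add_rev]

lemma trace_M_succ (ω lam x y : ℝ) (n : ℕ) :
    Matrix.trace ((M ω lam (n + 1) x y)ᵀ * M ω lam (n + 1) x y) =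
      (traceGram (fun j => v ω j x y) n).eval lam := by
  rw [M_succ_eq, traceGram]
  simp only [Matrix.trace_fin_two, Matrix.mul_apply, Fin.sum_univ_two, Matrix.transpose_apply,
    Matrix.of_apply, Matrix.cons_val_zero, Matrix.cons_val_one, Polynomial.eval_add,
    Polynomial.eval_pow, Matrix.cons_val', Matrix.cons_val_fin_one]
  ring

lemma P_succ_eq (ω lam : ℝ) (n : ℕ) :
    P ω (n + 1) lam = torusMean ((traceGram (potential ω) n).eval (algebraMap ℝ _ lam)) := by
  have heval (x y : ℝ) : (traceGram (potential ω) n).eval (algebraMap ℝ _ lam) (x, y) =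
      (traceGram (fun j => v ω j x y) n).eval lam := by
    let ev : C(ℝ × ℝ, ℝ) →+* ℝ := (Pi.evalRingHom _ (x, y)).comp ContinuousMap.coeFnRingHom
    have hpotential : (fun j => v ω j x y) = fun j => ev (potential ω j) :=
      funext fun j => (potential_apply ω j x y).symm
    rw [hpotential, ← map_traceGram, Polynomial.eval_map]
    exact (Polynomial.eval₂_at_apply ev (algebraMap ℝ _ lam)).symm
  simp only [P, trace_M_succ, torusMean_apply, heval]

lemma P_succ_eq_sum (ω lam : ℝ) (n : ℕ) :
    P ω (n + 1) lam = ∑ k ∈ Finset.range (n + 2),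
      torusMean ((traceGram (potential ω) n).coeff (2 * k)) * lam ^ (2 * k) := by
  rw [P_succ_eq, eval_eq_sum_range_even (fun _ => coeff_traceGram_eq_zero_of_odd _ n)
    (natDegree_traceGram_le _ n), map_sum]
  refine Finset.sum_congr rfl fun k _ => ?_
  rw [← map_pow, mul_comm, ← Algebra.smul_def, map_smul, smul_eq_mul, mul_comm]

end TransferMatrices

/-- `P_n` is an even polynomial in `λ` whose `λ⁴`-coefficient is given by the
quadratic Weyl sum formula
`α₄ = 4 ∑_{m=1}^{⌊n/2⌋} |∑_{l=1}^m e[ω(l²-l)]|² + 4 ∑_{m=1}^{⌊(n-1)/2⌋} |∑_{l=1}^m e[ω(l²-l)]|²`. -/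
theorem stmt_2 (ω : ℝ) (n : ℕ) (hn : 1 ≤ n) :
    ∃ α : ℕ → ℝ,
      (∀ lam' : ℝ, P ω n lam' = ∑ k ∈ Finset.range (n + 1), α k * lam' ^ (2 * k)) ∧
      α 2 =
        4 * ∑ m ∈ Finset.Icc 1 (n / 2),
            ‖∑ l ∈ Finset.Icc 1 m,
                Complex.exp (2 * (Real.pi : ℂ) * Complex.I * (ω : ℂ) *
                  ((l : ℂ) ^ 2 - (l : ℂ)))‖ ^ 2
          + 4 * ∑ m ∈ Finset.Icc 1 ((n - 1) / 2),
              ‖∑ l ∈ Finset.Icc 1 m,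
                  Complex.exp (2 * (Real.pi : ℂ) * Complex.I * (ω : ℂ) *
                    ((l : ℂ) ^ 2 - (l : ℂ)))‖ ^ 2 := by
  obtain ⟨n, rfl⟩ := Nat.exists_eq_add_of_le' hn
  refine ⟨fun k => torusMean ((traceGram (potential ω) n).coeff (2 * k)),
    fun lam' => P_succ_eq_sum ω lam' n, ?_⟩
  change _ = 4 * ∑ m ∈ Finset.Icc 1 ((n + 1) / 2), ‖weylSum ω m‖ ^ 2
    + 4 * ∑ m ∈ Finset.Icc 1 (n / 2), ‖weylSum ω m‖ ^ 2
  rw [four_mul_sum_norm_weylSum_sq, four_mul_sum_norm_weylSum_sq]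
  exact (hasParallelogramMoments_potential ω).map_coeff_four_traceGram n
end

section
/- There exist universal constants δ > 0 and C₀ > 0 and an integer n₀ ≥ 1 such that, for every integer n ≥ n₀, there exists a Lebesgue-measurable set Ω_n ⊆ [0,1] of Lebesgue measure at least δ with the property that for all ω ∈ Ω_n one has ∑_{m=1}^{n−1} |S_m(ω)|² ≥ C₀·n². -/
open MeasureTheory Real

/-- The quadratic Weyl sum `S_m(ω) = ∑_{j=1}^m exp(2πiω(j²-j))`. -/
noncomputable def S (ω : ℝ) (m : ℕ) : ℂ :=
  ∑ j ∈ Finset.Icc 1 m,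
    Complex.exp (2 * (Real.pi : ℂ) * Complex.I * (ω : ℂ) * ((j : ℂ) ^ 2 - (j : ℂ)))

/-!
At a rational `r` with odd denominator `q`, the sums satisfy `S_{m+q}(r) = S_m(r) + G`, where `G` is
a complete quadratic Gauss sum with `|G|² = q`. Hence `|S_m|² + |S_{m+q}|² ≥ q / 2`, and when `q` is
comparable to `n` the energy `∑_{m<n} |S_m(r)|²` is at least of order `n²`. By summation by parts,
moving the frequency by at most `1 / n²` changes the energy by at most a constant factor, so the
lower bound persists on the interval `[r, r + 1 / n²)`. There are at least `c n²` such `r` in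
`(0, 1)` with `q ≤ n / 2`, and they are `1 / n²`-separated, so their intervals are disjoint and have
total length bounded below.
-/

section SummationByParts

variable {R E : Type*} [SeminormedRing R] [SeminormedAddCommGroup E] [Module R E]
  [IsBoundedSMul R E] {w : ℕ → R} {ε : ℝ}

lemma norm_sum_range_smul_le (z : ℕ → E) (hw : ∀ j, ‖w j‖ ≤ 1) (m : ℕ)
    (hdiff : ∀ j, j + 1 < m → ‖w (j + 1) - w j‖ ≤ ε) :
    ‖∑ j ∈ Finset.range m, w j • z j‖ ≤
      ‖∑ j ∈ Finset.range m, z j‖ + ε * ∑ k ∈ Finset.range m, ‖∑ j ∈ Finset.range k, z j‖ := by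
  obtain _ | m := m
  · simp
  set Z : ℕ → E := fun k ↦ ∑ j ∈ Finset.range k, z j
  have hterm : ∀ i ∈ Finset.range m, ‖(w (i + 1) - w i) • Z (i + 1)‖ ≤ ε * ‖Z (i + 1)‖ := by
    intro i hi
    refine (norm_smul_le _ _).trans ?_
    gcongr
    exact hdiff i (Nat.succ_lt_succ (Finset.mem_range.mp hi))
  calc ‖∑ j ∈ Finset.range (m + 1), w j • z j‖
      = ‖w m • Z (m + 1) - ∑ i ∈ Finset.range m, (w (i + 1) - w i) • Z (i + 1)‖ := by
        rw [Finset.sum_range_by_parts, Nat.add_sub_cancel]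
    _ ≤ ‖w m‖ * ‖Z (m + 1)‖ + ∑ i ∈ Finset.range m, ε * ‖Z (i + 1)‖ :=
        (norm_sub_le _ _).trans (add_le_add (norm_smul_le _ _) (norm_sum_le_of_le _ hterm))
    _ ≤ ‖Z (m + 1)‖ + ε * ∑ k ∈ Finset.range (m + 1), ‖Z k‖ := by
        rw [Finset.sum_range_succ', ← Finset.mul_sum]
        have : ‖w m‖ * ‖Z (m + 1)‖ ≤ ‖Z (m + 1)‖ := mul_le_of_le_one_left (norm_nonneg _) (hw m)
        simpa [Z] using this

lemma sum_norm_sq_sum_range_smul_le (z : ℕ → E) (hw : ∀ j, ‖w j‖ ≤ 1) (hε : 0 ≤ ε) (n : ℕ)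
    (hdiff : ∀ j, j + 1 < n → ‖w (j + 1) - w j‖ ≤ ε) :
    ∑ m ∈ Finset.range n, ‖∑ j ∈ Finset.range m, w j • z j‖ ^ 2 ≤
      2 * (1 + (ε * n) ^ 2) * ∑ m ∈ Finset.range n, ‖∑ j ∈ Finset.range m, z j‖ ^ 2 := by
  set Z : ℕ → E := fun k ↦ ∑ j ∈ Finset.range k, z j
  set L := ∑ m ∈ Finset.range n, ‖Z m‖
  have cauchy_schwarz : L ^ 2 ≤ n * ∑ m ∈ Finset.range n, ‖Z m‖ ^ 2 := by
    simpa using sq_sum_le_card_mul_sum_sq (s := Finset.range n) (f := fun m ↦ ‖Z m‖)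
  have hterm : ∀ m ∈ Finset.range n,
      ‖∑ j ∈ Finset.range m, w j • z j‖ ^ 2 ≤ 2 * (‖Z m‖ ^ 2 + (ε * L) ^ 2) := by
    intro m hm
    have hmn : m < n := Finset.mem_range.mp hm
    have hbound : ‖∑ j ∈ Finset.range m, w j • z j‖ ≤ ‖Z m‖ + ε * L := by
      refine (norm_sum_range_smul_le z hw m fun j hj ↦ hdiff j (hj.trans hmn)).trans ?_
      gcongr
      exact Finset.sum_le_sum_of_subset_of_nonneg (Finset.range_mono hmn.le)
        fun _ _ _ ↦ norm_nonneg _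
    exact (pow_le_pow_left₀ (norm_nonneg _) hbound 2).trans add_sq_le
  calc ∑ m ∈ Finset.range n, ‖∑ j ∈ Finset.range m, w j • z j‖ ^ 2
      ≤ ∑ m ∈ Finset.range n, 2 * (‖Z m‖ ^ 2 + (ε * L) ^ 2) := Finset.sum_le_sum hterm
    _ = 2 * (∑ m ∈ Finset.range n, ‖Z m‖ ^ 2 + n * ε ^ 2 * L ^ 2) := by
        rw [← Finset.mul_sum, Finset.sum_add_distrib, Finset.sum_const, Finset.card_range,
          nsmul_eq_mul]
        ring
    _ ≤ 2 * (∑ m ∈ Finset.range n, ‖Z m‖ ^ 2 +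
          n * ε ^ 2 * (n * ∑ m ∈ Finset.range n, ‖Z m‖ ^ 2)) := by gcongr
    _ = 2 * (1 + (ε * n) ^ 2) * ∑ m ∈ Finset.range n, ‖Z m‖ ^ 2 := by ring

end SummationByParts

section QuadraticGaussSum

/-- Expanding the square and substituting `x = y + h` makes the phase linear in `y`, so only the
`h` with `2 * a * h = 0` survive summation over `y`. -/
lemma norm_sq_sum_addChar_quadratic {R : Type*} [CommRing R] [Fintype R] {ψ : AddChar R ℂ}
    (hψ : ψ.IsPrimitive) {a : R} (ha : IsUnit (2 * a)) (b : R) :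
    ‖∑ x, ψ (a * x ^ 2 + b * x)‖ ^ 2 = Fintype.card R := by
  classical
  have hshift (y : R) : (∑ x, ψ (a * x ^ 2 + b * x)) * (starRingEnd ℂ) (ψ (a * y ^ 2 + b * y)) =
      ∑ h, ψ (a * h ^ 2 + b * h) * ψ (y * (2 * a * h)) := by
    rw [Finset.sum_mul, ← Equiv.sum_comp (Equiv.addRight y)]
    refine Finset.sum_congr rfl fun h _ ↦ ?_
    rw [← AddChar.map_neg_eq_conj, ← AddChar.map_add_eq_mul, ← AddChar.map_add_eq_mul,
      Equiv.coe_addRight]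
    ring_nf
  have hsq : (∑ x, ψ (a * x ^ 2 + b * x)) * (starRingEnd ℂ) (∑ x, ψ (a * x ^ 2 + b * x)) =
      Fintype.card R := by
    rw [map_sum, Finset.mul_sum, Finset.sum_congr rfl fun y _ ↦ hshift y, Finset.sum_comm]
    simp_rw [← Finset.mul_sum, AddChar.sum_mulShift _ hψ, ha.mul_right_eq_zero]
    simp
  rw [Complex.mul_conj, Complex.normSq_eq_norm_sq] at hsq
  exact_mod_cast hsq

variable {M : Type*} [AddCommMonoid M] {q : ℕ} [NeZero q]

lemma sum_range_natCast_zmod (f : ZMod q → M) : ∑ j ∈ Finset.range q, f j = ∑ x, f x :=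
  Finset.sum_nbij' (fun j ↦ (j : ZMod q)) ZMod.val (by simp)
    (fun x _ ↦ Finset.mem_range.mpr x.val_lt)
    (fun _ hj ↦ ZMod.val_cast_of_lt (Finset.mem_range.mp hj)) (by simp) (by simp)

lemma sum_range_add_natCast_zmod (f : ZMod q → M) (m : ℕ) :
    ∑ j ∈ Finset.range (m + q), f j = ∑ j ∈ Finset.range m, f j + ∑ x, f x := by
  rw [Finset.sum_range_add, ← Equiv.sum_comp (Equiv.addLeft (m : ZMod q)) f,
    ← sum_range_natCast_zmod]
  simp

end QuadraticGaussSum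

lemma natCast_mul_norm_sq_le_four_mul_sum_norm_sq {E : Type*} [SeminormedAddCommGroup E]
    {T : ℕ → E} {G : E} {q : ℕ} (hT : ∀ m, T (m + q) = T m + G) (k : ℕ) :
    k * ‖G‖ ^ 2 ≤ 4 * ∑ m ∈ Finset.range (k + q), ‖T m‖ ^ 2 := by
  have hpair (m : ℕ) : ‖G‖ ^ 2 ≤ 2 * (‖T (m + q)‖ ^ 2 + ‖T m‖ ^ 2) := by
    have hG : ‖G‖ ≤ ‖T (m + q)‖ + ‖T m‖ := by
      simpa [hT m] using norm_sub_le (T (m + q)) (T m)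
    exact (pow_le_pow_left₀ (norm_nonneg _) hG 2).trans add_sq_le
  have hshifted : ∑ m ∈ Finset.range k, ‖T (m + q)‖ ^ 2 ≤
      ∑ m ∈ Finset.range (k + q), ‖T m‖ ^ 2 := by
    simp_rw [add_comm _ q, Finset.sum_range_add _ q k]
    exact le_add_of_nonneg_left (by positivity)
  have hinitial : ∑ m ∈ Finset.range k, ‖T m‖ ^ 2 ≤ ∑ m ∈ Finset.range (k + q), ‖T m‖ ^ 2 := by
    rw [Finset.sum_range_add]
    exact le_add_of_nonneg_right (by positivity)
  calc (k : ℝ) * ‖G‖ ^ 2 = ∑ _m ∈ Finset.range k, ‖G‖ ^ 2 := by simp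
    _ ≤ ∑ m ∈ Finset.range k, 2 * (‖T (m + q)‖ ^ 2 + ‖T m‖ ^ 2) :=
        Finset.sum_le_sum fun m _ ↦ hpair m
    _ = 2 * (∑ m ∈ Finset.range k, ‖T (m + q)‖ ^ 2 + ∑ m ∈ Finset.range k, ‖T m‖ ^ 2) := by
        rw [← Finset.mul_sum, Finset.sum_add_distrib]
    _ ≤ 4 * ∑ m ∈ Finset.range (k + q), ‖T m‖ ^ 2 := by linarith

section WeylSum

open scoped FourierTransform

lemma norm_fourierChar_sub_fourierChar_le (x y : ℝ) : ‖(𝐞 x : ℂ) - 𝐞 y‖ ≤ 2 * π * |x - y| := by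
  have hfactor : (𝐞 x : ℂ) - 𝐞 y =
      𝐞 y * (Complex.exp (Complex.I * (2 * π * (x - y) : ℝ)) - 1) := by
    rw [mul_sub, mul_one, fourierChar_apply, fourierChar_apply, ← Complex.exp_add]
    push_cast
    ring_nf
  calc ‖(𝐞 x : ℂ) - 𝐞 y‖ = ‖Complex.exp (Complex.I * (2 * π * (x - y) : ℝ)) - 1‖ := by
        rw [hfactor, norm_mul, Circle.norm_coe, one_mul]
    _ ≤ ‖2 * π * (x - y)‖ := norm_exp_I_mul_ofReal_sub_one_le
    _ = 2 * π * |x - y| := by rw [norm_mul, norm_of_nonneg (by positivity), norm_eq_abs]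

lemma S_eq_sum_range_fourierChar (ω : ℝ) (m : ℕ) :
    S ω m = ∑ j ∈ Finset.range m, (𝐞 (ω * (j * (j + 1))) : ℂ) := by
  rw [S, ← Finset.Ico_add_one_right_eq_Icc, Finset.sum_Ico_eq_sum_range, Nat.add_sub_cancel]
  refine Finset.sum_congr rfl fun j _ ↦ ?_
  rw [fourierChar_apply]
  push_cast
  ring_nf

/-- The phase `x ↦ exp(2πir(x² + x))` at a rational frequency `r`, which only depends on the residue
class of `x` modulo the denominator of `r`. -/
noncomputable def ratPhase (r : ℚ) [NeZero r.den] (x : ZMod r.den) : ℂ :=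
  ZMod.stdAddChar ((r.num : ZMod r.den) * x ^ 2 + (r.num : ZMod r.den) * x)

section RationalFrequency

variable (r : ℚ) [NeZero r.den]

lemma S_ratCast_eq_sum_range_ratPhase (m : ℕ) :
    S r m = ∑ j ∈ Finset.range m, ratPhase r j := by
  rw [S_eq_sum_range_fourierChar]
  refine Finset.sum_congr rfl fun j _ ↦ ?_
  have hchar := ZMod.stdAddChar_coe (N := r.den) (r.num * j ^ 2 + r.num * j)
  push_cast at hchar
  rw [ratPhase, hchar, fourierChar_apply, Rat.cast_def]
  push_cast
  ring_nf

lemma S_ratCast_add_den (m : ℕ) : S r (m + r.den) = S r m + ∑ x, ratPhase r x := by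
  simp_rw [S_ratCast_eq_sum_range_ratPhase, sum_range_add_natCast_zmod]

variable {r} in
lemma norm_sq_sum_ratPhase (hr : Odd r.den) : ‖∑ x, ratPhase r x‖ ^ 2 = r.den := by
  have htwo : IsUnit ((2 : ℕ) : ZMod r.den) :=
    (ZMod.isUnit_iff_coprime _ _).mpr (Nat.coprime_two_left.mpr hr)
  have hnum : IsUnit (r.num : ZMod r.den) :=
    (ZMod.coe_int_isUnit_iff_isCoprime _ _).mpr r.isCoprime_num_den.symm
  simp_rw [ratPhase]
  rw [norm_sq_sum_addChar_quadratic (ZMod.isPrimitive_stdAddChar _) (htwo.mul hnum), ZMod.card]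

end RationalFrequency

/-- The energy `∑_{m < n} |S_m(ω)|²` of the first Weyl sums. The index starts at `0`, which adds
only the term `S_0(ω) = 0`. -/
noncomputable def weylEnergy (ω : ℝ) (n : ℕ) : ℝ :=
  ∑ m ∈ Finset.range n, ‖S ω m‖ ^ 2

lemma weylEnergy_nonneg (ω : ℝ) (n : ℕ) : 0 ≤ weylEnergy ω n :=
  Finset.sum_nonneg fun _ _ ↦ by positivity

lemma weylEnergy_eq_sum_Icc (ω : ℝ) (n : ℕ) :
    weylEnergy ω n = ∑ m ∈ Finset.Icc 1 (n - 1), ‖S ω m‖ ^ 2 := by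
  obtain _ | n := n
  · simp [weylEnergy]
  rw [weylEnergy, Finset.sum_range_succ', Nat.add_sub_cancel, ← Finset.Ico_add_one_right_eq_Icc,
    Finset.sum_Ico_eq_sum_range]
  simp [S, add_comm 1]

lemma weylEnergy_le_mul_weylEnergy (α ω : ℝ) (n : ℕ) :
    weylEnergy α n ≤ 2 * (1 + (4 * π * (n ^ 2 * |α - ω|)) ^ 2) * weylEnergy ω n := by
  set w : ℕ → ℂ := fun j ↦ 𝐞 ((α - ω) * (j * (j + 1)))
  have hdiff : ∀ j, j + 1 < n → ‖w (j + 1) - w j‖ ≤ 4 * π * (n * |α - ω|) := by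
    intro j hj
    have hjn : (j : ℝ) + 1 ≤ n := by exact_mod_cast hj.le
    calc ‖w (j + 1) - w j‖
        ≤ 2 * π * |(α - ω) * (↑(j + 1) * (↑(j + 1) + 1)) - (α - ω) * (j * (j + 1))| :=
          norm_fourierChar_sub_fourierChar_le _ _
      _ = 2 * π * |(α - ω) * (2 * (j + 1))| := by push_cast; ring_nf
      _ = 4 * π * ((j + 1) * |α - ω|) := by
          rw [abs_mul, abs_of_nonneg (by positivity : (0 : ℝ) ≤ 2 * (j + 1))]
          ring
      _ ≤ 4 * π * (n * |α - ω|) := by gcongr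
  have hS (m : ℕ) : S α m = ∑ j ∈ Finset.range m, w j • (𝐞 (ω * (j * (j + 1))) : ℂ) := by
    rw [S_eq_sum_range_fourierChar]
    refine Finset.sum_congr rfl fun j _ ↦ ?_
    rw [smul_eq_mul, ← Circle.coe_mul, ← AddChar.map_add_eq_mul]
    ring_nf
  simp_rw [weylEnergy, hS, S_eq_sum_range_fourierChar ω]
  refine (sum_norm_sq_sum_range_smul_le _ (fun j ↦ (Circle.norm_coe _).le) (by positivity) n
    hdiff).trans_eq ?_
  ring_nf

lemma mul_den_le_four_mul_weylEnergy {r : ℚ} (hr : Odd r.den) (k : ℕ) :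
    (k * r.den : ℝ) ≤ 4 * weylEnergy r (k + r.den) := by
  have : NeZero r.den := ⟨r.den_nz⟩
  rw [← norm_sq_sum_ratPhase hr]
  exact natCast_mul_norm_sq_le_four_mul_sum_norm_sq (S_ratCast_add_den r) k

lemma sq_le_mul_weylEnergy_ratCast {r : ℚ} (hr : Odd r.den) {n c : ℕ} (hlarge : 2 * r.den ≤ n)
    (hsmall : n ≤ c * r.den) : (n : ℝ) ^ 2 ≤ 8 * c * weylEnergy r n := by
  obtain ⟨k, rfl⟩ : ∃ k, n = k + r.den := ⟨n - r.den, by omega⟩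
  have hlength : ((k + r.den : ℕ) : ℝ) ≤ 2 * k := by exact_mod_cast (by omega)
  have hden : ((k + r.den : ℕ) : ℝ) ≤ c * r.den := by exact_mod_cast hsmall
  calc ((k + r.den : ℕ) : ℝ) ^ 2 ≤ (2 * k) * (c * r.den) := by rw [sq]; gcongr
    _ = 2 * c * (k * r.den) := by ring
    _ ≤ 2 * c * (4 * weylEnergy r (k + r.den)) :=
        mul_le_mul_of_nonneg_left (mul_den_le_four_mul_weylEnergy hr k) (by positivity)
    _ = 8 * c * weylEnergy r (k + r.den) := by ring

lemma sq_le_mul_weylEnergy_of_abs_sub_le {r : ℚ} (hr : Odd r.den) {n c : ℕ}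
    (hlarge : 2 * r.den ≤ n) (hsmall : n ≤ c * r.den) {ω : ℝ} (hω : |r - ω| ≤ 1 / n ^ 2) :
    (n : ℝ) ^ 2 ≤ 16 * c * (1 + (4 * π) ^ 2) * weylEnergy ω n := by
  have hn : (0 : ℝ) < n := by exact_mod_cast (by have := r.den_pos; omega)
  have hscaled : n ^ 2 * |r - ω| ≤ 1 := by
    rwa [le_div_iff₀' (by positivity)] at hω
  calc (n : ℝ) ^ 2 ≤ 8 * c * weylEnergy r n := sq_le_mul_weylEnergy_ratCast hr hlarge hsmall
    _ ≤ 8 * c * (2 * (1 + (4 * π * (n ^ 2 * |r - ω|)) ^ 2) * weylEnergy ω n) := by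
        gcongr
        exact weylEnergy_le_mul_weylEnergy r ω n
    _ ≤ 8 * c * (2 * (1 + (4 * π * 1) ^ 2) * weylEnergy ω n) := by
        gcongr
        exact weylEnergy_nonneg ω n
    _ = 16 * c * (1 + (4 * π) ^ 2) * weylEnergy ω n := by ring

end WeylSum

section Farey

lemma one_div_den_mul_den_le_abs_sub {x y : ℚ} (hxy : x ≠ y) :
    1 / (x.den * y.den : ℚ) ≤ |x - y| := by
  have hnum : (1 : ℚ) ≤ |((x - y).num : ℚ)| := by
    exact_mod_cast Int.one_le_abs (Rat.num_ne_zero.mpr (sub_ne_zero.mpr hxy))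
  have hden : ((x - y).den : ℚ) ≤ x.den * y.den := by
    exact_mod_cast Nat.le_of_dvd (Nat.mul_pos x.den_pos y.den_pos) (Rat.sub_den_dvd x y)
  have hpos : (0 : ℚ) < (x - y).den := by exact_mod_cast (x - y).den_pos
  calc 1 / (x.den * y.den : ℚ) ≤ |((x - y).num : ℚ)| / (x - y).den := by gcongr
    _ = |x - y| := by rw [← abs_of_pos hpos, ← abs_div, Rat.num_div_den]

lemma one_div_sq_le_abs_sub_of_den_le {x y : ℚ} (hxy : x ≠ y) {n : ℕ} (hx : x.den ≤ n)
    (hy : y.den ≤ n) : 1 / (n : ℝ) ^ 2 ≤ |(x : ℝ) - y| := by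
  have hpos : (0 : ℚ) < x.den * y.den := by exact_mod_cast Nat.mul_pos x.den_pos y.den_pos
  have hrat : 1 / (n : ℚ) ^ 2 ≤ |x - y| := by
    refine (one_div_le_one_div_of_le hpos ?_).trans (one_div_den_mul_den_le_abs_sub hxy)
    rw [sq]
    gcongr
  simpa using (Rat.cast_le (K := ℝ)).mpr hrat

lemma Ico_ratCast_subset_Icc_zero_one {r : ℚ} (hnonneg : 0 ≤ r) (hlt : r < 1) {n : ℕ}
    (hden : r.den ≤ n) : Set.Ico (r : ℝ) (r + 1 / n ^ 2) ⊆ Set.Icc 0 1 := by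
  have hgap : 1 / (n : ℝ) ^ 2 ≤ |((1 : ℚ) : ℝ) - r| :=
    one_div_sq_le_abs_sub_of_den_le hlt.ne' (r.den_pos.trans_le hden) hden
  have hnonneg' : (0 : ℝ) ≤ r := by exact_mod_cast hnonneg
  have hlt' : (r : ℝ) < 1 := by exact_mod_cast hlt
  rw [Rat.cast_one, abs_of_pos (sub_pos.mpr hlt')] at hgap
  exact fun ω hω ↦ ⟨hnonneg'.trans hω.1, by linarith [hω.2]⟩

lemma volume_biUnion_Ico_of_separated {ι : Type*} (s : Finset ι) (x : ι → ℝ) {δ : ℝ}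
    (hsep : (s : Set ι).Pairwise fun i j ↦ δ ≤ |x i - x j|) :
    volume (⋃ i ∈ s, Set.Ico (x i) (x i + δ)) = ENNReal.ofReal (s.card * δ) := by
  have hdisj : (s : Set ι).PairwiseDisjoint fun i ↦ Set.Ico (x i) (x i + δ) := by
    intro i hi j hj hij
    refine Set.disjoint_left.mpr fun y hyi hyj ↦ (hsep hi hj hij).not_gt ?_
    rw [abs_sub_lt_iff]
    constructor <;> linarith [hyi.1, hyi.2, hyj.1, hyj.2]
  rw [measure_biUnion_finset hdisj fun _ _ ↦ measurableSet_Ico]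
  simp [ENNReal.ofReal_mul]

end Farey

section CoprimePairs

lemma sum_range_one_div_odd_sq_le (N : ℕ) :
    ∑ k ∈ Finset.range N, 1 / (2 * k + 3 : ℝ) ^ 2 ≤ 1 / 4 := by
  have hterm (k : ℕ) : 1 / (2 * k + 3 : ℝ) ^ 2 ≤ 1 / (4 * (k + 1)) - 1 / (4 * (↑(k + 1) + 1)) := by
    rw [div_sub_div _ _ (by positivity) (by positivity),
      div_le_div_iff₀ (by positivity) (by positivity)]
    push_cast
    nlinarith
  calc ∑ k ∈ Finset.range N, 1 / (2 * k + 3 : ℝ) ^ 2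
      ≤ ∑ k ∈ Finset.range N, (1 / (4 * (k + 1)) - 1 / (4 * (↑(k + 1) + 1)) : ℝ) :=
        Finset.sum_le_sum fun k _ ↦ hterm k
    _ = 1 / (4 * ((0 : ℕ) + 1)) - 1 / (4 * (N + 1)) :=
        Finset.sum_range_sub' (fun k : ℕ ↦ (1 / (4 * (k + 1)) : ℝ)) N
    _ ≤ 1 / 4 := by
        have : (0 : ℝ) ≤ 1 / (4 * (N + 1)) := by positivity
        norm_num at this ⊢
        exact this

lemma filter_odd_not_coprime_subset_biUnion (M N : ℕ) :
    {p ∈ Finset.Ioc 0 M ×ˢ Finset.Ioc 0 N | Odd p.2 ∧ ¬ p.1.Coprime p.2} ⊆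
      (Finset.range N).biUnion fun k ↦
        {a ∈ Finset.Ioc 0 M | 2 * k + 3 ∣ a} ×ˢ {b ∈ Finset.Ioc 0 N | 2 * k + 3 ∣ b} := by
  rintro ⟨a, b⟩ hab
  simp only [Finset.mem_filter, Finset.mem_product, Finset.mem_Ioc] at hab
  obtain ⟨⟨ha, hb⟩, hodd, hgcd⟩ := hab
  obtain ⟨k, hk⟩ : Odd (a.gcd b) := hodd.of_dvd_nat (Nat.gcd_dvd_right a b)
  have hle : a.gcd b ≤ b := Nat.le_of_dvd hb.1 (Nat.gcd_dvd_right a b)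
  rw [Nat.coprime_iff_gcd_eq_one] at hgcd
  have hd : 2 * (k - 1) + 3 = a.gcd b := by omega
  refine Finset.mem_biUnion.mpr ⟨k - 1, Finset.mem_range.mpr (by omega), ?_⟩
  simp only [Finset.mem_product, Finset.mem_filter, Finset.mem_Ioc, hd]
  exact ⟨⟨ha, Nat.gcd_dvd_left a b⟩, hb, Nat.gcd_dvd_right a b⟩

lemma four_mul_card_odd_not_coprime_le (M N : ℕ) :
    4 * Finset.card {p ∈ Finset.Ioc 0 M ×ˢ Finset.Ioc 0 N | Odd p.2 ∧ ¬ p.1.Coprime p.2} ≤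
      M * N := by
  set B := {p ∈ Finset.Ioc 0 M ×ˢ Finset.Ioc 0 N | Odd p.2 ∧ ¬ p.1.Coprime p.2}
  have hunion : B.card ≤ ∑ k ∈ Finset.range N, (M / (2 * k + 3)) * (N / (2 * k + 3)) := by
    refine (Finset.card_le_card (filter_odd_not_coprime_subset_biUnion M N)).trans
      (Finset.card_biUnion_le.trans_eq ?_)
    simp only [Finset.card_product, Nat.Ioc_filter_dvd_card_eq_div]
  have hterm (k : ℕ) : ((M / (2 * k + 3) : ℕ) * (N / (2 * k + 3) : ℕ) : ℝ) ≤
      M * N * (1 / (2 * k + 3 : ℝ) ^ 2) := by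
    calc ((M / (2 * k + 3) : ℕ) * (N / (2 * k + 3) : ℕ) : ℝ)
        ≤ (M / (2 * k + 3 : ℕ)) * (N / (2 * k + 3 : ℕ)) := by
          gcongr <;> exact Nat.cast_div_le
      _ = M * N * (1 / (2 * k + 3 : ℝ) ^ 2) := by
          push_cast
          rw [div_mul_div_comm, mul_one_div, ← sq]
  have hreal : (B.card : ℝ) ≤ M * N * (1 / 4) := by
    calc (B.card : ℝ) ≤ ∑ k ∈ Finset.range N,
          ((M / (2 * k + 3) : ℕ) * (N / (2 * k + 3) : ℕ) : ℝ) := by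
          exact_mod_cast hunion
      _ ≤ ∑ k ∈ Finset.range N, M * N * (1 / (2 * k + 3 : ℝ) ^ 2) :=
          Finset.sum_le_sum fun k _ ↦ hterm k
      _ ≤ M * N * (1 / 4) := by
          rw [← Finset.mul_sum]
          gcongr
          exact sum_range_one_div_odd_sq_le N
  have : (4 * B.card : ℝ) ≤ M * N := by linarith
  exact_mod_cast this

lemma le_two_mul_card_odd (N : ℕ) : N ≤ 2 * Finset.card {b ∈ Finset.Ioc 0 N | Odd b} := by
  have heven := Nat.Ioc_filter_dvd_card_eq_div N 2
  have htotal := Finset.card_filter_add_card_filter_not (s := Finset.Ioc 0 N) (2 ∣ ·)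
  simp only [Nat.card_Ioc, ← even_iff_two_dvd, Nat.not_even_iff_odd] at heven htotal
  omega

lemma mul_le_four_mul_card_odd_coprime (M N : ℕ) :
    M * N ≤
      4 * Finset.card {p ∈ Finset.Ioc 0 M ×ˢ Finset.Ioc 0 N | Odd p.2 ∧ p.1.Coprime p.2} := by
  have hodd : M * N ≤ 2 * Finset.card {p ∈ Finset.Ioc 0 M ×ˢ Finset.Ioc 0 N | Odd p.2} := by
    rw [Finset.filter_product_right, Finset.card_product, Nat.card_Ioc, Nat.sub_zero,
      Nat.mul_left_comm]
    exact Nat.mul_le_mul_left M (le_two_mul_card_odd N)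
  have hsplit := Finset.card_filter_add_card_filter_not
    (s := {p ∈ Finset.Ioc 0 M ×ˢ Finset.Ioc 0 N | Odd p.2}) (fun p ↦ p.1.Coprime p.2)
  rw [Finset.filter_filter, Finset.filter_filter] at hsplit
  have hbad := four_mul_card_odd_not_coprime_le M N
  omega

lemma exists_finset_odd_coprime_pairs (A : ℕ) :
    ∃ P : Finset (ℕ × ℕ), A ^ 2 ≤ P.card ∧
      ∀ p ∈ P, p.1 ∈ Set.Ioc 0 A ∧ p.2 ∈ Set.Ioc A (8 * A) ∧ Odd p.2 ∧ p.1.Coprime p.2 := by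
  set P := {p ∈ Finset.Ioc 0 A ×ˢ Finset.Ioc 0 (8 * A) | Odd p.2 ∧ p.1.Coprime p.2}
  refine ⟨P \ Finset.Ioc 0 A ×ˢ Finset.Ioc 0 A, ?_, ?_⟩
  · have hP : A * (8 * A) ≤ 4 * P.card := mul_le_four_mul_card_odd_coprime A (8 * A)
    have hremoved := Finset.le_card_sdiff (Finset.Ioc 0 A ×ˢ Finset.Ioc 0 A) P
    rw [Finset.card_product, Nat.card_Ioc, Nat.sub_zero] at hremoved
    have hmul : A * (8 * A) = 8 * (A * A) := by ring
    rw [sq]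
    omega
  · simp only [P, Finset.mem_sdiff, Finset.mem_filter, Finset.mem_product, Finset.mem_Ioc,
      Set.mem_Ioc]
    grind

lemma den_natCast_div_natCast_of_coprime {a b : ℕ} (hb : 0 < b) (hab : a.Coprime b) :
    (a / b : ℚ).den = b := by
  simpa using Rat.den_div_eq_of_coprime (a := a) (b := b) (by exact_mod_cast hb) hab

lemma injOn_natCast_div_natCast_coprime :
    Set.InjOn (fun p : ℕ × ℕ ↦ (p.1 / p.2 : ℚ)) {p | 0 < p.2 ∧ p.1.Coprime p.2} := by
  rintro ⟨a, b⟩ ⟨hb, hab⟩ ⟨a', b'⟩ ⟨hb', hab'⟩ heq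
  have := Rat.div_int_inj (a := a) (b := b) (c := a') (d := b') (by exact_mod_cast hb)
    (by exact_mod_cast hb') hab hab' (by simpa using heq)
  simpa using this

lemma exists_finset_rat_odd_den (A : ℕ) :
    ∃ F : Finset ℚ, A ^ 2 ≤ F.card ∧
      ∀ r ∈ F, 0 < r ∧ r < 1 ∧ Odd r.den ∧ A < r.den ∧ r.den ≤ 8 * A := by
  obtain ⟨P, hcard, hP⟩ := exists_finset_odd_coprime_pairs A
  have hpos : ∀ p ∈ P, 0 < p.2 := fun p hp ↦ (Nat.zero_le A).trans_lt (hP p hp).2.1.1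
  refine ⟨P.image fun p ↦ (p.1 / p.2 : ℚ), ?_, ?_⟩
  · have hsub : (P : Set (ℕ × ℕ)) ⊆ {p | 0 < p.2 ∧ p.1.Coprime p.2} :=
      fun p hp ↦ ⟨hpos p hp, (hP p hp).2.2.2⟩
    rwa [Finset.card_image_of_injOn (injOn_natCast_div_natCast_coprime.mono hsub)]
  · refine Finset.forall_mem_image.mpr fun p hp ↦ ?_
    obtain ⟨ha, hb, hodd, hcop⟩ := hP p hp
    have hapos : (0 : ℚ) < p.1 := by exact_mod_cast ha.1
    have hbpos : (0 : ℚ) < p.2 := by exact_mod_cast hpos p hp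
    have hab : (p.1 : ℚ) < p.2 := by exact_mod_cast ha.2.trans_lt hb.1
    rw [den_natCast_div_natCast_of_coprime (hpos p hp) hcop]
    exact ⟨div_pos hapos hbpos, (div_lt_one hbpos).mpr hab, hodd, hb.1, hb.2⟩

end CoprimePairs

/-- There are universal constants `δ, C₀ > 0` and `n₀ ≥ 1` such that for every `n ≥ n₀`
there is a set `Ω_n ⊆ [0,1]` of Lebesgue measure at least `δ` with
`∑_{m=1}^{n-1} |S_m(ω)|² ≥ C₀ n²` for all `ω ∈ Ω_n`. -/
theorem stmt_7 :
    ∃ δ > (0 : ℝ), ∃ C₀ > (0 : ℝ), ∃ n₀ : ℕ, 1 ≤ n₀ ∧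
      ∀ n : ℕ, n₀ ≤ n →
        ∃ Ω : Set ℝ, Ω ⊆ Set.Icc 0 1 ∧ MeasurableSet Ω ∧
          ENNReal.ofReal δ ≤ volume Ω ∧
          ∀ ω ∈ Ω, C₀ * (n : ℝ) ^ 2 ≤ ∑ m ∈ Finset.Icc 1 (n - 1), ‖S ω m‖ ^ 2 := by
  refine ⟨1 / 32 ^ 2, by norm_num, (16 * (32 : ℕ) * (1 + (4 * π) ^ 2))⁻¹, by positivity, 16,
    by norm_num, fun n hn ↦ ?_⟩
  obtain ⟨A, hAn, hnA⟩ : ∃ A, 16 * A ≤ n ∧ n ≤ 32 * A := ⟨n / 16, by omega, by omega⟩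
  obtain ⟨F, hcard, hF⟩ := exists_finset_rat_odd_den A
  have hden : ∀ r ∈ F, 2 * r.den ≤ n ∧ n ≤ 32 * r.den := by grind
  refine ⟨⋃ r ∈ F, Set.Ico (r : ℝ) (r + 1 / n ^ 2), ?_,
    F.measurableSet_biUnion fun _ _ ↦ measurableSet_Ico, ?_, fun ω hω ↦ ?_⟩
  · exact Set.iUnion₂_subset fun r hr ↦
      Ico_ratCast_subset_Icc_zero_one (hF r hr).1.le (hF r hr).2.1 (by grind)
  · rw [volume_biUnion_Ico_of_separated F _ fun x hx y hy hxy ↦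
      one_div_sq_le_abs_sub_of_den_le hxy (by grind) (by grind)]
    refine ENNReal.ofReal_le_ofReal ?_
    have hcount : (n : ℝ) ^ 2 ≤ 32 ^ 2 * F.card := by
      exact_mod_cast (Nat.pow_le_pow_left hnA 2).trans (by rw [mul_pow]; gcongr)
    rw [mul_one_div, div_le_div_iff₀ (by norm_num) (by positivity)]
    linarith
  · obtain ⟨r, hr, hωr⟩ := Set.mem_iUnion₂.mp hω
    have hnear : |r - ω| ≤ 1 / n ^ 2 := by
      rw [abs_sub_le_iff]
      constructor <;> linarith [hωr.1, hωr.2]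
    rw [← weylEnergy_eq_sum_Icc, inv_mul_le_iff₀ (by positivity)]
    exact sq_le_mul_weylEnergy_of_abs_sub_le (hF r hr).2.2.1 (hden r hr).1 (hden r hr).2 hnear
end
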